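/- Let κ > 0, let q be a real-valued Schwartz function on ℝ, and set G_κ(x,y) = e^{−κ|x−y|}/(2κ). Then for every integer ℓ ≥ 2: ∫_{ℝ^ℓ} [ ∏_{i=1}^{ℓ-1} G_κ(x_i,x_{i+1}) q(x_{i+1}) ] G_κ(x_ℓ,x₁) (−q'''(x₁)) dx₁⋯dx_ℓ = ∫_{ℝ^{ℓ-1}} [ ∏_{i=1}^{ℓ-2} G_κ(x_i,x_{i+1}) q(x_{i+1}) ] G_κ(x_{ℓ-1},x₁) · 6 q(x₁) q'(x₁) dx₁⋯dx_{ℓ-1}. In particular, for ℓ = 2 the right-hand side is ∫_ℝ G_κ(x,x) · 6 q(x) q'(x) dx, which equals 0. -/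

import Mathlib

open MeasureTheory Complex Real

/-- The kernel of the free resolvent `(-∂ₓ² + κ²)⁻¹` on `L²(ℝ)`. -/
noncomputable def Gker (κ x y : ℝ) : ℝ := Real.exp (-κ * |x - y|) / (2 * κ)

/-!
As a function of `x`, the product `G(x,z) G(x,w)` is a constant multiple of an exponential on each
of the three intervals cut out by `z` and `w`, so integrating by parts on these intervals gives
`∫ (4κ²q' - q''')(x) G(x,z) G(x,w) dx = G(z,w) (q'(z) + q'(w) + 2κ sign(z-w) (q(z) - q(w)))`
and `∫ f'(x) G(x,z) G(x,w) dx = κ ∫ f(x) (sign(x-z) + sign(x-w)) G(x,z) G(x,w) dx`.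
Apply the first formula to the variable carrying `-q'''` in the cyclic integral of length `ℓ`. The
second formula with `f = q`, together with cyclic invariance, shows that `4κ²q'` contributes
nothing. In the resulting cyclic integral of length `ℓ - 1`, cyclic invariance turns
the terms `q'(z) + q'(w)` into `2qq'`, and the second formula with `f = q²` turns the terms with
the sign into `2(q²)' = 4qq'`, for a total of `6qq'`.
-/

lemma measurable_real_sign : Measurable Real.sign :=
  Measurable.ite measurableSet_Iio measurable_const
    (Measurable.ite measurableSet_Ioi measurable_const measurable_const)

lemma abs_real_sign_le_one (x : ℝ) : |Real.sign x| ≤ 1 := by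
  rcases Real.sign_apply_eq x with h | h | h <;> simp [h]

lemma real_sign_sub_comm (x y : ℝ) : Real.sign (x - y) = -Real.sign (y - x) := by
  rw [← Real.sign_neg, neg_sub]

lemma integrable_sign_mul {α : Type*} [MeasurableSpace α] {μ : Measure α} {φ F : α → ℝ}
    (hφ : Measurable φ) (hF : Integrable F μ) : Integrable (fun x => Real.sign (φ x) * F x) μ :=
  hF.bdd_mul (measurable_real_sign.comp hφ).aestronglyMeasurable
    (ae_of_all _ fun _ => abs_real_sign_le_one _)

lemma integral_eq_Iio_add_Ioo_add_Ioi {F : ℝ → ℝ} (hF : Integrable F) {z w : ℝ} (hzw : z ≤ w) :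
    ∫ x, F x = (∫ x in Set.Iio z, F x) + (∫ x in Set.Ioo z w, F x) + ∫ x in Set.Ioi w, F x := by
  rw [← integral_Iic_eq_integral_Iio, ← integral_Ioc_eq_integral_Ioo,
    ← setIntegral_union (Set.Iic_disjoint_Ioc le_rfl) measurableSet_Ioc hF.integrableOn
      hF.integrableOn, Set.Iic_union_Ioc_eq_Iic hzw,
    intervalIntegral.integral_Iic_add_Ioi hF.integrableOn hF.integrableOn]

section HalfLine

variable {f f' : ℝ → ℝ} {c : ℝ}

lemma integral_Iio_of_hasDerivAt_of_integrable {z : ℝ} (hf : ∀ x, HasDerivAt f (f' x) x)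
    (hfi : IntegrableOn f (Set.Iic z)) (hfi' : IntegrableOn f' (Set.Iic z)) :
    ∫ x in Set.Iio z, f' x = f z := by
  rw [← integral_Iic_eq_integral_Iio, integral_Iic_of_hasDerivAt_of_tendsto' (fun x _ => hf x) hfi'
    (tendsto_zero_of_hasDerivAt_of_integrableOn_Iic (fun x _ => hf x) hfi' hfi), sub_zero]

lemma integral_Ioi_of_hasDerivAt_of_integrable {z : ℝ} (hf : ∀ x, HasDerivAt f (f' x) x)
    (hfi : IntegrableOn f (Set.Ioi z)) (hfi' : IntegrableOn f' (Set.Ioi z)) :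
    ∫ x in Set.Ioi z, f' x = -f z := by
  rw [integral_Ioi_of_hasDerivAt_of_tendsto' (fun x _ => hf x) hfi'
    (tendsto_zero_of_hasDerivAt_of_integrableOn_Ioi (fun x _ => hf x) hfi' hfi), zero_sub]

lemma integral_Ioo_of_hasDerivAt (hf : ∀ x, HasDerivAt f (f' x) x)
    (hfi' : Integrable f') {z w : ℝ} (hzw : z ≤ w) : ∫ x in Set.Ioo z w, f' x = f w - f z := by
  rw [← integral_Ioc_eq_integral_Ioo, ← intervalIntegral.integral_of_le hzw,
    intervalIntegral.integral_eq_sub_of_hasDerivAt (fun x _ => hf x) hfi'.intervalIntegrable]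

lemma abs_le_integral_abs_of_hasDerivAt (hf : ∀ x, HasDerivAt f (f' x) x) (hfi : Integrable f)
    (hfi' : Integrable f') (x : ℝ) : |f x| ≤ ∫ t, |f' t| := by
  rw [← integral_Iio_of_hasDerivAt_of_integrable hf hfi.integrableOn hfi'.integrableOn]
  exact (norm_integral_le_integral_norm _).trans
    (setIntegral_le_integral hfi'.norm (ae_of_all _ fun t => norm_nonneg _))

lemma integrable_comp_mul_of_hasDerivAt {α : Type*} [MeasurableSpace α] {μ : Measure α}
    {φ F : α → ℝ} (hf : ∀ x, HasDerivAt f (f' x) x) (hfi : Integrable f) (hfi' : Integrable f')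
    (hφ : Measurable φ) (hF : Integrable F μ) : Integrable (fun x => f (φ x) * F x) μ := by
  have hcont : Continuous f := continuous_iff_continuousAt.2 fun x => (hf x).continuousAt
  exact hF.bdd_mul (hcont.measurable.comp hφ).aestronglyMeasurable
    (ae_of_all _ fun x => abs_le_integral_abs_of_hasDerivAt hf hfi hfi' (φ x))

/-- The integral of `f` over the half-line to the left of `z` against the exponential weight of
rate `c` normalised to be `1` at `z`; for `c = 2κ` this is the contribution of that half-line to
the integral of `f` against a product of two kernels. -/
noncomputable def leftExpIntegral (c : ℝ) (f : ℝ → ℝ) (z : ℝ) : ℝ :=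
  ∫ x in Set.Iio z, Real.exp (c * (x - z)) * f x

/-- The mirror image of `leftExpIntegral`, over the half-line to the right of `z`. -/
noncomputable def rightExpIntegral (c : ℝ) (f : ℝ → ℝ) (z : ℝ) : ℝ :=
  ∫ x in Set.Ioi z, Real.exp (-c * (x - z)) * f x

lemma integrableOn_Iic_exp_mul (hc : 0 ≤ c) (hf : Integrable f) (z : ℝ) :
    IntegrableOn (fun x => Real.exp (c * (x - z)) * f x) (Set.Iic z) := by
  refine hf.integrableOn.bdd_mul (c := 1) (by fun_prop)
    ((ae_restrict_mem measurableSet_Iic).mono fun x hx => ?_)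
  rw [Real.norm_eq_abs, Real.abs_exp, Real.exp_le_one_iff]
  exact mul_nonpos_of_nonneg_of_nonpos hc (sub_nonpos.2 hx)

lemma integrableOn_Ioi_exp_mul (hc : 0 ≤ c) (hf : Integrable f) (z : ℝ) :
    IntegrableOn (fun x => Real.exp (-c * (x - z)) * f x) (Set.Ioi z) := by
  refine hf.integrableOn.bdd_mul (c := 1) (by fun_prop)
    ((ae_restrict_mem measurableSet_Ioi).mono fun x hx => ?_)
  rw [Real.norm_eq_abs, Real.abs_exp, Real.exp_le_one_iff]
  exact mul_nonpos_of_nonpos_of_nonneg (neg_nonpos.2 hc) (sub_nonneg.2 hx.le)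

lemma hasDerivAt_exp_mul (a z : ℝ) (hf : ∀ x, HasDerivAt f (f' x) x) (x : ℝ) :
    HasDerivAt (fun x => Real.exp (a * (x - z)) * f x)
      (Real.exp (a * (x - z)) * f' x + a * (Real.exp (a * (x - z)) * f x)) x := by
  have hexp := (((hasDerivAt_id x).sub_const z).const_mul a).exp
  exact (hexp.mul (hf x)).congr_deriv (by simp; ring)

lemma leftExpIntegral_deriv (hc : 0 ≤ c) (hf : ∀ x, HasDerivAt f (f' x) x) (hfi : Integrable f)
    (hfi' : Integrable f') (z : ℝ) :
    leftExpIntegral c f' z = f z - c * leftExpIntegral c f z := by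
  have hi := integrableOn_Iic_exp_mul hc hfi z
  have hi' := integrableOn_Iic_exp_mul hc hfi' z
  have hFTC := integral_Iio_of_hasDerivAt_of_integrable (hasDerivAt_exp_mul c z hf) hi
    (hi'.add (hi.const_mul c))
  rw [integral_add (hi'.mono_set Set.Iio_subset_Iic_self)
    ((hi.mono_set Set.Iio_subset_Iic_self).const_mul c), integral_const_mul] at hFTC
  simp only [sub_self, mul_zero, Real.exp_zero, one_mul] at hFTC
  unfold leftExpIntegral
  linarith

lemma rightExpIntegral_deriv (hc : 0 ≤ c) (hf : ∀ x, HasDerivAt f (f' x) x) (hfi : Integrable f)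
    (hfi' : Integrable f') (z : ℝ) :
    rightExpIntegral c f' z = -f z + c * rightExpIntegral c f z := by
  have hi := integrableOn_Ioi_exp_mul hc hfi z
  have hi' := integrableOn_Ioi_exp_mul hc hfi' z
  have hFTC := integral_Ioi_of_hasDerivAt_of_integrable (hasDerivAt_exp_mul (-c) z hf) hi
    (hi'.add (hi.const_mul (-c)))
  rw [integral_add hi' (hi.const_mul (-c)), integral_const_mul] at hFTC
  simp only [sub_self, mul_zero, Real.exp_zero, one_mul] at hFTC
  unfold rightExpIntegral
  linarith

end HalfLine

section Kernel

variable {κ : ℝ}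

lemma continuous_Gker (κ : ℝ) : Continuous fun p : ℝ × ℝ => Gker κ p.1 p.2 := by
  unfold Gker; fun_prop

lemma Gker_comm (κ x y : ℝ) : Gker κ x y = Gker κ y x := by
  unfold Gker; rw [abs_sub_comm]

lemma Gker_self (κ x : ℝ) : Gker κ x x = 1 / (2 * κ) := by simp [Gker]

lemma abs_Gker_le (hκ : 0 ≤ κ) (x y : ℝ) : |Gker κ x y| ≤ 1 / (2 * κ) := by
  rw [Gker, abs_of_nonneg (by positivity)]
  gcongr
  rw [Real.exp_le_one_iff]
  exact mul_nonpos_of_nonpos_of_nonneg (neg_nonpos.2 hκ) (abs_nonneg _)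

lemma Gker_mul_Gker_of_left {x z w : ℝ} (hxz : x ≤ z) (hzw : z ≤ w) :
    Gker κ x z * Gker κ x w = Gker κ z w / (2 * κ) * Real.exp (2 * κ * (x - z)) := by
  have hexp : Real.exp (κ * (x - z)) * Real.exp (κ * (x - w)) =
      Real.exp (κ * (z - w)) * Real.exp (2 * κ * (x - z)) := by
    rw [← Real.exp_add, ← Real.exp_add]; ring_nf
  simp only [Gker, abs_of_nonpos (sub_nonpos.2 hxz), abs_of_nonpos (sub_nonpos.2 hzw),
    abs_of_nonpos (sub_nonpos.2 (hxz.trans hzw)), neg_mul_neg]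
  linear_combination hexp / (2 * κ) ^ 2

lemma Gker_mul_Gker_of_between {x z w : ℝ} (hzx : z ≤ x) (hxw : x ≤ w) :
    Gker κ x z * Gker κ x w = Gker κ z w / (2 * κ) := by
  have hexp : Real.exp (-κ * (x - z)) * Real.exp (κ * (x - w)) = Real.exp (κ * (z - w)) := by
    rw [← Real.exp_add]; ring_nf
  simp only [Gker, abs_of_nonneg (sub_nonneg.2 hzx), abs_of_nonpos (sub_nonpos.2 hxw),
    abs_of_nonpos (sub_nonpos.2 (hzx.trans hxw)), neg_mul_neg]
  linear_combination hexp / (2 * κ) ^ 2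

lemma Gker_mul_Gker_of_right {x z w : ℝ} (hzw : z ≤ w) (hwx : w ≤ x) :
    Gker κ x z * Gker κ x w = Gker κ z w / (2 * κ) * Real.exp (-(2 * κ) * (x - w)) := by
  have hexp : Real.exp (-κ * (x - z)) * Real.exp (-κ * (x - w)) =
      Real.exp (κ * (z - w)) * Real.exp (-(2 * κ) * (x - w)) := by
    rw [← Real.exp_add, ← Real.exp_add]; ring_nf
  simp only [Gker, abs_of_nonneg (sub_nonneg.2 (hzw.trans hwx)), abs_of_nonneg (sub_nonneg.2 hwx),
    abs_of_nonpos (sub_nonpos.2 hzw), neg_mul_neg]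
  linear_combination hexp / (2 * κ) ^ 2

lemma integrable_mul_Gker_mul_Gker (hκ : 0 ≤ κ) {h : ℝ → ℝ} (hh : Integrable h) (z w : ℝ) :
    Integrable fun x => h x * (Gker κ x z * Gker κ x w) := by
  have hcont : ∀ y, Continuous fun x => Gker κ x y := fun y =>
    (continuous_Gker κ).comp (by fun_prop : Continuous fun x => (x, y))
  refine hh.mul_bdd (c := 1 / (2 * κ) * (1 / (2 * κ)))
    ((hcont z).mul (hcont w)).aestronglyMeasurable (ae_of_all _ fun x => ?_)
  rw [norm_mul]
  exact mul_le_mul (abs_Gker_le hκ x z) (abs_Gker_le hκ x w) (norm_nonneg _) (by positivity)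

lemma integral_mul_Gker_mul_Gker (hκ : 0 ≤ κ) {h : ℝ → ℝ} (hh : Integrable h) {z w : ℝ}
    (hzw : z ≤ w) :
    ∫ x, h x * (Gker κ x z * Gker κ x w) = Gker κ z w / (2 * κ) *
      (leftExpIntegral (2 * κ) h z + (∫ x in Set.Ioo z w, h x) +
        rightExpIntegral (2 * κ) h w) := by
  rw [integral_eq_Iio_add_Ioo_add_Ioi (integrable_mul_Gker_mul_Gker hκ hh z w) hzw, mul_add,
    mul_add, leftExpIntegral, rightExpIntegral, ← integral_const_mul, ← integral_const_mul,
    ← integral_const_mul]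
  congr 1
  · congr 1
    · refine setIntegral_congr_fun measurableSet_Iio fun x hx => ?_
      simp only [Gker_mul_Gker_of_left hx.le hzw]
      ring
    · refine setIntegral_congr_fun measurableSet_Ioo fun x hx => ?_
      simp only [Gker_mul_Gker_of_between hx.1.le hx.2.le]
      ring
  · refine setIntegral_congr_fun measurableSet_Ioi fun x hx => ?_
    simp only [Gker_mul_Gker_of_right hzw hx.le]
    ring

lemma integral_deriv_mul_Gker_mul_Gker (hκ : 0 < κ) {f f' : ℝ → ℝ}
    (hf : ∀ x, HasDerivAt f (f' x) x) (hfi : Integrable f) (hfi' : Integrable f') (z w : ℝ) :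
    ∫ x, f' x * (Gker κ x z * Gker κ x w) =
      κ * ∫ x, (Real.sign (x - z) + Real.sign (x - w)) * f x * (Gker κ x z * Gker κ x w) := by
  wlog hzw : z ≤ w generalizing z w
  · simpa only [mul_comm (Gker κ _ w), add_comm (Real.sign (_ - w))]
      using this w z (le_of_not_ge hzw)
  have hint : Integrable fun x => (Real.sign (x - z) + Real.sign (x - w)) * f x := by
    simp only [add_mul]
    exact (integrable_sign_mul (by fun_prop) hfi).add (integrable_sign_mul (by fun_prop) hfi)
  have hleft : leftExpIntegral (2 * κ) (fun x => (Real.sign (x - z) + Real.sign (x - w)) * f x) z =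
      -2 * leftExpIntegral (2 * κ) f z := by
    rw [leftExpIntegral, leftExpIntegral, ← integral_const_mul]
    refine setIntegral_congr_fun measurableSet_Iio fun x hx => ?_
    simp only [Real.sign_of_neg (sub_neg.2 hx), Real.sign_of_neg (sub_neg.2 (hx.trans_le hzw))]
    ring
  have hmid : ∫ x in Set.Ioo z w, (Real.sign (x - z) + Real.sign (x - w)) * f x = 0 := by
    refine setIntegral_eq_zero_of_forall_eq_zero fun x hx => ?_
    rw [Real.sign_of_pos (sub_pos.2 hx.1), Real.sign_of_neg (sub_neg.2 hx.2)]
    ring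
  have hright :
      rightExpIntegral (2 * κ) (fun x => (Real.sign (x - z) + Real.sign (x - w)) * f x) w =
        2 * rightExpIntegral (2 * κ) f w := by
    rw [rightExpIntegral, rightExpIntegral, ← integral_const_mul]
    refine setIntegral_congr_fun measurableSet_Ioi fun x hx => ?_
    simp only [Real.sign_of_pos (sub_pos.2 hx), Real.sign_of_pos (sub_pos.2 (hzw.trans_lt hx))]
    ring
  have h2κ : 0 ≤ 2 * κ := by positivity
  rw [integral_mul_Gker_mul_Gker hκ.le hfi' hzw, integral_mul_Gker_mul_Gker hκ.le hint hzw,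
    leftExpIntegral_deriv h2κ hf hfi hfi', integral_Ioo_of_hasDerivAt hf hfi' hzw,
    rightExpIntegral_deriv h2κ hf hfi hfi', hleft, hmid, hright]
  ring

lemma integral_third_deriv_mul_Gker_mul_Gker (hκ : 0 < κ) {q q' q'' q''' : ℝ → ℝ}
    (hq : ∀ x, HasDerivAt q (q' x) x) (hq' : ∀ x, HasDerivAt q' (q'' x) x)
    (hq'' : ∀ x, HasDerivAt q'' (q''' x) x) (hi' : Integrable q') (hi'' : Integrable q'')
    (hi''' : Integrable q''') (z w : ℝ) :
    ∫ x, (4 * κ ^ 2 * q' x - q''' x) * (Gker κ x z * Gker κ x w) =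
      Gker κ z w * (q' z + q' w + 2 * κ * (Real.sign (z - w) * (q z - q w))) := by
  wlog hzw : z ≤ w generalizing z w
  · have := this w z (le_of_not_ge hzw)
    rw [Gker_comm κ w, real_sign_sub_comm] at this
    simp only [mul_comm (Gker κ _ w)] at this
    rw [this]
    ring
  have h2κ : 0 ≤ 2 * κ := by positivity
  have hsign : Real.sign (z - w) * (q z - q w) = q w - q z := by
    rcases hzw.eq_or_lt with rfl | h
    · simp
    · rw [Real.sign_of_neg (sub_neg.2 h)]; ring
  have hsplit : ∫ x, (4 * κ ^ 2 * q' x - q''' x) * (Gker κ x z * Gker κ x w) =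
      4 * κ ^ 2 * (∫ x, q' x * (Gker κ x z * Gker κ x w)) -
        ∫ x, q''' x * (Gker κ x z * Gker κ x w) := by
    rw [← integral_const_mul, ← integral_sub
      ((integrable_mul_Gker_mul_Gker hκ.le hi' z w).const_mul _)
      (integrable_mul_Gker_mul_Gker hκ.le hi''' z w)]
    congr 1 with x
    ring
  rw [hsplit, integral_mul_Gker_mul_Gker hκ.le hi' hzw,
    integral_mul_Gker_mul_Gker hκ.le hi''' hzw, leftExpIntegral_deriv h2κ hq'' hi'' hi''',
    leftExpIntegral_deriv h2κ hq' hi' hi'', integral_Ioo_of_hasDerivAt hq hi' hzw,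
    integral_Ioo_of_hasDerivAt hq'' hi''' hzw, rightExpIntegral_deriv h2κ hq'' hi'' hi''',
    rightExpIntegral_deriv h2κ hq' hi' hi'', hsign]
  field_simp
  ring

end Kernel

section Cyclic

variable {κ : ℝ} {n : ℕ} {h q q' : ℝ → ℝ}

/-- The integrand of `tr {(R₀q)ⁿ R₀h}`, with `h` attached to the variable of index `0`. The index
`i + 1` in the kernel is taken modulo `n + 1`. -/
noncomputable def traceDensity (κ : ℝ) (h q : ℝ → ℝ) (n : ℕ) (x : Fin (n + 1) → ℝ) : ℝ :=
  (∏ i, Gker κ (x i) (x (i + 1))) * (h (x 0) * ∏ i : Fin n, q (x i.succ))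

/-- The integrand `∏ G(xᵢ, xᵢ₊₁) ∏ q(xᵢ)` in which the kernels form an open chain, obtained from a
cycle by deleting one vertex. -/
noncomputable def chainDensity (κ : ℝ) (q : ℝ → ℝ) (n : ℕ) (x : Fin (n + 1) → ℝ) : ℝ :=
  (∏ i : Fin n, Gker κ (x i.castSucc) (x i.succ)) * ∏ i, q (x i)

lemma prod_Gker_mul_prod_ite (κ : ℝ) (h q : ℝ → ℝ) (x : Fin (n + 1) → ℝ) :
    (∏ i, Gker κ (x i) (x (i + 1))) * ∏ i, (if i = 0 then h (x i) else q (x i)) =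
      traceDensity κ h q n x := by
  rw [traceDensity, Fin.prod_univ_succ (fun i => if i = 0 then h (x i) else q (x i))]
  simp only [if_true, Fin.succ_ne_zero, if_false]

lemma traceDensity_self (κ : ℝ) (q : ℝ → ℝ) (x : Fin (n + 1) → ℝ) :
    traceDensity κ q q n x = (∏ i, Gker κ (x i) (x (i + 1))) * ∏ i, q (x i) := by
  rw [traceDensity, Fin.prod_univ_succ fun i => q (x i)]

lemma traceDensity_mul_left (κ : ℝ) (g h q : ℝ → ℝ) (x : Fin (n + 1) → ℝ) :
    traceDensity κ (fun t => g t * h t) q n x = g (x 0) * traceDensity κ h q n x := by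
  unfold traceDensity; ring

lemma prod_Gker_cyclic (κ : ℝ) (x : Fin (n + 1) → ℝ) :
    ∏ i, Gker κ (x i) (x (i + 1)) =
      (∏ i : Fin n, Gker κ (x i.castSucc) (x i.succ)) * Gker κ (x 0) (x (Fin.last n)) := by
  rw [Fin.prod_univ_castSucc, Fin.last_add_one, Gker_comm κ (x 0)]
  simp only [Fin.coeSucc_eq_succ]

lemma chainDensity_mul_Gker (κ : ℝ) (q : ℝ → ℝ) (x : Fin (n + 1) → ℝ) :
    chainDensity κ q n x * Gker κ (x 0) (x (Fin.last n)) = traceDensity κ q q n x := by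
  rw [traceDensity_self, prod_Gker_cyclic, chainDensity]
  ring

lemma traceDensity_cons (κ : ℝ) (h q : ℝ → ℝ) (a : ℝ) (y : Fin (n + 1) → ℝ) :
    traceDensity κ h q (n + 1) (Fin.cons a y) =
      chainDensity κ q n y * (h a * (Gker κ a (y 0) * Gker κ a (y (Fin.last n)))) := by
  rw [traceDensity, prod_Gker_cyclic, Fin.prod_univ_succ, chainDensity, ← Fin.succ_last]
  simp only [Fin.castSucc_zero, Fin.cons_zero, Fin.cons_succ, ← Fin.succ_castSucc]
  ring

lemma abs_prod_Gker_le (hκ : 0 ≤ κ) (x : Fin (n + 1) → ℝ) :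
    |∏ i, Gker κ (x i) (x (i + 1))| ≤ (1 / (2 * κ)) ^ (n + 1) := by
  rw [Finset.abs_prod]
  exact (Finset.prod_le_prod (fun _ _ => abs_nonneg _) fun _ _ => abs_Gker_le hκ _ _).trans_eq
    (by simp)

lemma integrable_traceDensity (hκ : 0 ≤ κ) (hh : Integrable h) (hq : Integrable q) :
    Integrable (traceDensity κ h q n) := by
  have hprod : Integrable fun x : Fin (n + 1) → ℝ => h (x 0) * ∏ i : Fin n, q (x i.succ) := by
    have := Integrable.fintype_prod (f := (Fin.cons h fun _ => q : Fin (n + 1) → ℝ → ℝ))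
      (μ := fun _ => volume) (Fin.cases hh fun _ => hq)
    simpa only [Fin.prod_univ_succ, Fin.cons_zero, Fin.cons_succ, ← volume_pi] using this
  have hcont : Continuous fun x : Fin (n + 1) → ℝ => ∏ i, Gker κ (x i) (x (i + 1)) := by
    unfold Gker; fun_prop
  exact hprod.bdd_mul hcont.aestronglyMeasurable (ae_of_all _ (abs_prod_Gker_le hκ))

lemma integral_fin_cons {F : (Fin (n + 1) → ℝ) → ℝ} (hF : Integrable F) :
    ∫ x, F x = ∫ y : Fin n → ℝ, ∫ a : ℝ, F (Fin.cons a y) := by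
  have hmp := (volume_preserving_piFinSuccAbove (fun _ : Fin (n + 1) => ℝ) 0).symm
  have hint := (hmp.integrable_comp_emb (MeasurableEquiv.measurableEmbedding _)).2 hF
  rw [← hmp.integral_comp' F]
  refine (integral_prod_symm _ hint).trans ?_
  simp [MeasurableEquiv.piFinSuccAbove, Fin.insertNthEquiv, Fin.insertNth_zero']

lemma integral_comp_add_one (F : (Fin (n + 1) → ℝ) → ℝ) :
    ∫ x : Fin (n + 1) → ℝ, F (fun i => x (i + 1)) = ∫ x, F x := by
  let e := MeasurableEquiv.arrowCongr' (Equiv.subRight (1 : Fin (n + 1))) (MeasurableEquiv.refl ℝ)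
  have he : MeasurePreserving e :=
    volume_preserving_arrowCongr' _ _ (MeasurePreserving.id volume)
  exact he.integral_comp' F

lemma traceDensity_self_comp_add_one (κ : ℝ) (q : ℝ → ℝ) (x : Fin (n + 1) → ℝ) :
    traceDensity κ q q n (fun i => x (i + 1)) = traceDensity κ q q n x := by
  rw [traceDensity_self, traceDensity_self]
  congr 1
  · exact Equiv.prod_comp (Equiv.addRight (1 : Fin (n + 1))) fun i => Gker κ (x i) (x (i + 1))
  · exact Equiv.prod_comp (Equiv.addRight (1 : Fin (n + 1))) fun i => q (x i)

lemma integral_mul_traceDensity_rotate (κ : ℝ) (q : ℝ → ℝ) (n : ℕ) (F : ℝ → ℝ → ℝ) :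
    ∫ x, F (x (Fin.last n)) (x 0) * traceDensity κ q q n x =
      ∫ x, F (x 0) (x 1) * traceDensity κ q q n x := by
  rw [← integral_comp_add_one]
  simp only [traceDensity_self_comp_add_one, Fin.last_add_one, zero_add]

lemma integral_traceDensity_deriv (hκ : 0 < κ) {f f' : ℝ → ℝ}
    (hf : ∀ x, HasDerivAt f (f' x) x) (hfi : Integrable f) (hfi' : Integrable f')
    (hq : Integrable q) (n : ℕ) :
    ∫ x, traceDensity κ f' q n x =
      κ * ((∫ x, Real.sign (x 0 - x 1) * traceDensity κ f q n x) +
        ∫ x, Real.sign (x 0 - x (Fin.last n)) * traceDensity κ f q n x) := by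
  have hsign (i j : Fin (n + 1)) :
      Integrable fun x => Real.sign (x i - x j) * traceDensity κ f q n x :=
    integrable_sign_mul (by fun_prop) (integrable_traceDensity hκ.le hfi hq)
  have hsum : Integrable fun x => Real.sign (x 0 - x 1) * traceDensity κ f q n x +
      Real.sign (x 0 - x (Fin.last n)) * traceDensity κ f q n x := (hsign 0 1).add (hsign 0 _)
  rw [← integral_add (hsign _ _) (hsign _ _), integral_fin_cons hsum,
    integral_fin_cons (integrable_traceDensity hκ.le hfi' hq)]
  cases n with
  | zero =>
    simp [traceDensity, Gker_self, integral_const_mul,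
      integral_eq_zero_of_hasDerivAt_of_integrable hf hfi' hfi]
  | succ n =>
    rw [← integral_const_mul]
    congr 1 with y
    simp only [traceDensity_cons, integral_const_mul]
    rw [integral_deriv_mul_Gker_mul_Gker hκ hf hfi hfi', mul_left_comm, ← integral_const_mul]
    congr 2 with a
    rw [← Fin.succ_zero_eq_one, ← Fin.succ_last]
    simp only [Fin.cons_zero, Fin.cons_succ]
    ring

lemma integral_traceDensity_deriv_self (hκ : 0 < κ) (hq : ∀ x, HasDerivAt q (q' x) x)
    (hi : Integrable q) (hi' : Integrable q') (n : ℕ) :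
    ∫ x, traceDensity κ q' q n x = 0 := by
  have hswap : ∫ x, Real.sign (x 0 - x (Fin.last n)) * traceDensity κ q q n x =
      -∫ x, Real.sign (x 0 - x 1) * traceDensity κ q q n x := by
    rw [← integral_mul_traceDensity_rotate κ q n fun s t => Real.sign (s - t), ← integral_neg]
    congr 1 with x
    rw [real_sign_sub_comm, neg_mul]
  rw [integral_traceDensity_deriv hκ hq hi hi' hi, hswap, add_neg_cancel, mul_zero]

lemma integral_traceDensity_mul_deriv (hκ : 0 < κ) (hq : ∀ x, HasDerivAt q (q' x) x)
    (hi : Integrable q) (hi' : Integrable q') (n : ℕ) :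
    2 * ∫ x, q' (x 0) * traceDensity κ q q n x =
      κ * ((∫ x, Real.sign (x 0 - x 1) * q (x 0) * traceDensity κ q q n x) +
        ∫ x, Real.sign (x 0 - x (Fin.last n)) * q (x 0) * traceDensity κ q q n x) := by
  have hsq : ∀ x, HasDerivAt (fun x => q x * q x) (2 * q' x * q x) x := fun x =>
    ((hq x).mul (hq x)).congr_deriv (by ring)
  have hsqi : Integrable fun x => q x * q x :=
    integrable_comp_mul_of_hasDerivAt hq hi hi' measurable_id hi
  have hsqi' : Integrable fun x => 2 * q' x * q x :=
    ((integrable_comp_mul_of_hasDerivAt hq hi hi' measurable_id hi').const_mul 2).congr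
      (ae_of_all _ fun x => by simp only [id]; ring)
  have := integral_traceDensity_deriv hκ hsq hsqi hsqi' hi n
  simpa only [traceDensity_mul_left, mul_assoc, integral_const_mul] using this

lemma integral_traceDensity_succ (hκ : 0 ≤ κ) (hh : Integrable h) (hq : Integrable q)
    {k : ℝ → ℝ → ℝ}
    (hk : ∀ z w, ∫ x, h x * (Gker κ x z * Gker κ x w) = Gker κ z w * k z w) (n : ℕ) :
    ∫ x, traceDensity κ h q (n + 1) x =
      ∫ y, k (y 0) (y (Fin.last n)) * traceDensity κ q q n y := by
  rw [integral_fin_cons (integrable_traceDensity hκ hh hq)]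
  congr 1 with y
  simp only [traceDensity_cons, integral_const_mul, hk, ← chainDensity_mul_Gker]
  ring

lemma integral_symmetrized_mul_traceDensity (hκ : 0 < κ) {q'' : ℝ → ℝ}
    (hq : ∀ x, HasDerivAt q (q' x) x) (hq' : ∀ x, HasDerivAt q' (q'' x) x) (hi : Integrable q)
    (hi' : Integrable q') (hi'' : Integrable q'') (n : ℕ) :
    ∫ y, (q' (y 0) + q' (y (Fin.last n)) + 2 * κ * (Real.sign (y 0 - y (Fin.last n)) *
      (q (y 0) - q (y (Fin.last n))))) * traceDensity κ q q n y =
        6 * ∫ y, q' (y 0) * traceDensity κ q q n y := by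
  have hq'rot := integral_mul_traceDensity_rotate κ q n fun s _ => q' s
  have hsignrot := integral_mul_traceDensity_rotate κ q n fun s t => Real.sign (s - t) * q s
  have hparts := integral_traceDensity_mul_deriv hκ hq hi hi' n
  set D := traceDensity κ q q n
  have hDi : Integrable D := integrable_traceDensity hκ.le hi hi
  have hq'D (i : Fin (n + 1)) : Integrable fun y => q' (y i) * D y :=
    integrable_comp_mul_of_hasDerivAt hq' hi' hi'' (measurable_pi_apply i) hDi
  have hsignD (i j : Fin (n + 1)) :
      Integrable fun y => Real.sign (y i - y j) * q (y i) * D y := by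
    simp only [mul_assoc]
    exact integrable_sign_mul (by fun_prop)
      (integrable_comp_mul_of_hasDerivAt hq hi hi' (measurable_pi_apply i) hDi)
  have hexpand : ∀ y : Fin (n + 1) → ℝ,
      (q' (y 0) + q' (y (Fin.last n)) + 2 * κ * (Real.sign (y 0 - y (Fin.last n)) *
        (q (y 0) - q (y (Fin.last n))))) * D y =
      q' (y 0) * D y + q' (y (Fin.last n)) * D y +
        2 * κ * (Real.sign (y (Fin.last n) - y 0) * q (y (Fin.last n)) * D y +
          Real.sign (y 0 - y (Fin.last n)) * q (y 0) * D y) := fun y => by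
    rw [real_sign_sub_comm (y (Fin.last n))]; ring
  have hq'sum : Integrable fun y => q' (y 0) * D y + q' (y (Fin.last n)) * D y :=
    (hq'D _).add (hq'D _)
  have hsignsum : Integrable fun y => Real.sign (y (Fin.last n) - y 0) * q (y (Fin.last n)) * D y +
      Real.sign (y 0 - y (Fin.last n)) * q (y 0) * D y := (hsignD _ _).add (hsignD _ _)
  simp only [hexpand]
  rw [integral_add hq'sum (hsignsum.const_mul _), integral_const_mul,
    integral_add (hq'D _) (hq'D _), integral_add (hsignD _ _) (hsignD _ _), hq'rot, hsignrot]
  linear_combination -2 * hparts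

lemma integral_traceDensity_neg_third_deriv (hκ : 0 < κ) {q'' q''' : ℝ → ℝ}
    (hq : ∀ x, HasDerivAt q (q' x) x) (hq' : ∀ x, HasDerivAt q' (q'' x) x)
    (hq'' : ∀ x, HasDerivAt q'' (q''' x) x) (hi : Integrable q) (hi' : Integrable q')
    (hi'' : Integrable q'') (hi''' : Integrable q''') (n : ℕ) :
    ∫ x, traceDensity κ (fun t => -q''' t) q (n + 1) x =
      ∫ x, traceDensity κ (fun t => 6 * q t * q' t) q n x := by
  have hhi : Integrable fun x => 4 * κ ^ 2 * q' x - q''' x := (hi'.const_mul _).sub hi'''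
  calc ∫ x, traceDensity κ (fun t => -q''' t) q (n + 1) x
    _ = ∫ x, (traceDensity κ (fun t => 4 * κ ^ 2 * q' t - q''' t) q (n + 1) x -
          4 * κ ^ 2 * traceDensity κ q' q (n + 1) x) := by
      congr 1 with x
      unfold traceDensity
      ring
    _ = ∫ x, traceDensity κ (fun t => 4 * κ ^ 2 * q' t - q''' t) q (n + 1) x := by
      rw [integral_sub (integrable_traceDensity hκ.le hhi hi)
        ((integrable_traceDensity hκ.le hi' hi).const_mul _), integral_const_mul,
        integral_traceDensity_deriv_self hκ hq hi hi', mul_zero, sub_zero]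
    _ = 6 * ∫ x, q' (x 0) * traceDensity κ q q n x := by
      rw [integral_traceDensity_succ hκ.le hhi hi
        (integral_third_deriv_mul_Gker_mul_Gker hκ hq hq' hq'' hi' hi'' hi'''),
        integral_symmetrized_mul_traceDensity hκ hq hq' hi hi' hi'']
    _ = ∫ x, traceDensity κ (fun t => 6 * q t * q' t) q n x := by
      rw [← integral_const_mul]
      congr 1 with x
      unfold traceDensity
      ring

end Cyclic

lemma integral_Gker_self_mul_deriv (κ : ℝ) {q q' : ℝ → ℝ} (hq : ∀ x, HasDerivAt q (q' x) x)
    (hi : Integrable q) (hi' : Integrable q') :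
    ∫ x, Gker κ x x * (6 * q x * q' x) = 0 := by
  have hsq : ∀ x, HasDerivAt (fun x => q x * q x) (2 * (q x * q' x)) x := fun x =>
    ((hq x).mul (hq x)).congr_deriv (by ring)
  have hzero := integral_eq_zero_of_hasDerivAt_of_integrable hsq
    ((integrable_comp_mul_of_hasDerivAt hq hi hi' measurable_id hi').const_mul 2)
    (integrable_comp_mul_of_hasDerivAt hq hi hi' measurable_id hi)
  rw [integral_const_mul] at hzero
  simp only [Gker_self, mul_assoc, integral_const_mul]
  linear_combination (1 / (2 * κ) * 3) * hzero

lemma integrable_iteratedDeriv_schwartzMap (f : SchwartzMap ℝ ℝ) (k : ℕ) :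
    Integrable (iteratedDeriv k f) := by
  have hcont : Continuous (iteratedDeriv k f) := (f.smooth k).continuous_iteratedDeriv k le_rfl
  refine (integrable_norm_iff hcont.aestronglyMeasurable).1 ?_
  simpa [norm_iteratedFDeriv_eq_norm_iteratedDeriv] using
    f.integrable_pow_mul_iteratedFDeriv volume 0 k

theorem kdv_trace_identities_general {κ : ℝ} (hκ : 0 < κ) {q : ℝ → ℝ} (hq : ContDiff ℝ 3 q)
    (hint : ∀ k ≤ 3, Integrable (iteratedDeriv k q)) :
    (∀ m : ℕ,
      ∫ x : Fin (m + 2) → ℝ,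
        (∏ i : Fin (m + 2), Gker κ (x i) (x (i + 1))) *
          ∏ i : Fin (m + 2), (if i = 0 then -(iteratedDeriv 3 q (x i)) else q (x i)) =
      ∫ x : Fin (m + 1) → ℝ,
        (∏ i : Fin (m + 1), Gker κ (x i) (x (i + 1))) *
          ∏ i : Fin (m + 1), (if i = 0 then 6 * q (x i) * deriv q (x i) else q (x i))) ∧
    ∫ x : ℝ, Gker κ x x * (6 * q x * deriv q x) = 0 := by
  have hderiv (k : ℕ) (hk : k < 3) (x : ℝ) :
      HasDerivAt (iteratedDeriv k q) (iteratedDeriv (k + 1) q x) x := by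
    rw [iteratedDeriv_succ]
    exact (hq.differentiable_iteratedDeriv k (by exact_mod_cast hk) x).hasDerivAt
  have hq0 := hderiv 0 (by norm_num)
  have hi0 := hint 0 (by norm_num)
  have hi1 := hint 1 (by norm_num)
  rw [← iteratedDeriv_one]
  rw [iteratedDeriv_zero] at hq0 hi0
  refine ⟨fun m => ?_, integral_Gker_self_mul_deriv κ hq0 hi0 hi1⟩
  rw [funext (prod_Gker_mul_prod_ite κ (fun t => -iteratedDeriv 3 q t) q),
    funext (prod_Gker_mul_prod_ite κ (fun t => 6 * q t * iteratedDeriv 1 q t) q)]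
  exact integral_traceDensity_neg_third_deriv hκ hq0 (hderiv 1 (by norm_num))
    (hderiv 2 (by norm_num)) hi0 hi1 (hint 2 (by norm_num)) (hint 3 le_rfl) m

/-- Trace identities expressing conservation of the renormalized perturbation determinant
under the KdV flow: for each `ℓ = m + 2 ≥ 2`,
`tr{(R₀q)^{ℓ-1} R₀ (-q''')} = tr{(R₀q)^{ℓ-2} R₀ (6qq')}`, written out via the cyclic kernel
integrals; and for `ℓ = 2` the right-hand side `∫ G_κ(x,x) 6 q(x) q'(x) dx` vanishes. -/
theorem kdv_trace_identities (κ : ℝ) (hκ : 0 < κ) (q : SchwartzMap ℝ ℝ) :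
    (∀ m : ℕ,
      ∫ x : Fin (m + 2) → ℝ,
        (∏ i : Fin (m + 2), Gker κ (x i) (x (i + 1))) *
          ∏ i : Fin (m + 2),
            (if i = 0 then -(iteratedDeriv 3 (⇑q) (x i)) else q (x i)) =
      ∫ x : Fin (m + 1) → ℝ,
        (∏ i : Fin (m + 1), Gker κ (x i) (x (i + 1))) *
          ∏ i : Fin (m + 1),
            (if i = 0 then 6 * q (x i) * deriv (⇑q) (x i) else q (x i))) ∧
    ∫ x : ℝ, Gker κ x x * (6 * q x * deriv (⇑q) x) = 0 :=
  kdv_trace_identities_general hκ (q.smooth 3) fun k _ => integrable_iteratedDeriv_schwartzMap q k
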